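/- Let (x̄, ȳ) ∈ gph Y for a set-valued map Y : ℝⁿ ⇉ ℝᵐ with closed values and f : ℝⁿ × ℝᵐ → ℝ. Suppose f is semidifferentiable at (x̄, ȳ), and Y is semidifferentiable at x̄ for ȳ and calm around (x̄, ȳ). Then there exists κ > 0 such that the value function V_τ(x) := max_{y' ∈ Y(x) ∩ 𝔹_{κ‖x−x̄‖}(ȳ)} f(x, y') is semidifferentiable (hence directionally differentiable) at x̄, and for every u ∈ ℝⁿ its directional derivative is V_τ'(x̄; u) = max_{h ∈ DY(x̄, ȳ)(u)} df(x̄, ȳ)(u, h), the maximum being attained. -/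

import Mathlib

open Filter Topology Set Metric Classical
open scoped RealInnerProductSpace

noncomputable section

/-- Euclidean space ℝ^n. -/
abbrev Eu (n : ℕ) := EuclideanSpace ℝ (Fin n)

/-- The filter describing `t ↓ 0, w' → w`. -/
def quotFilter {E : Type*} [TopologicalSpace E] (w : E) : Filter (ℝ × E) :=
  (𝓝[>] (0 : ℝ)) ×ˢ 𝓝 w

section Normed

variable {E F : Type*} [NormedAddCommGroup E] [NormedSpace ℝ E]
  [NormedAddCommGroup F] [NormedSpace ℝ F]

/-- Subderivative `dψ(z)(w) = liminf_{t↓0, w'→w} (ψ(z+tw')-ψ(z))/t`, in `EReal`. -/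
def dsub (ψ : E → ℝ) (z w : E) : EReal :=
  liminf (fun p : ℝ × E => (((ψ (z + p.1 • p.2) - ψ z) / p.1 : ℝ) : EReal)) (quotFilter w)

/-- Superderivative `d⁺ψ(z)(w) = limsup_{t↓0, w'→w} (ψ(z+tw')-ψ(z))/t`, in `EReal`. -/
def dsup (ψ : E → ℝ) (z w : E) : EReal :=
  limsup (fun p : ℝ × E => (((ψ (z + p.1 • p.2) - ψ z) / p.1 : ℝ) : EReal)) (quotFilter w)

/-- `ψ` is semidifferentiable at `z`: for every `w` the limit of the difference
quotients exists (as a real number). -/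
def SemidiffAt (ψ : E → ℝ) (z : E) : Prop :=
  ∀ w, ∃ L : ℝ,
    Tendsto (fun p : ℝ × E => (ψ (z + p.1 • p.2) - ψ z) / p.1) (quotFilter w) (𝓝 L)

/-- Second subderivative `d²ψ(z)(w)` (without mention of a vector), in `EReal`. -/
def d2sub (ψ : E → ℝ) (z w : E) : EReal :=
  liminf (fun p : ℝ × E =>
      (((ψ (z + p.1 • p.2) - ψ z - p.1 * (dsub ψ z p.2).toReal) / (p.1 ^ 2 / 2) : ℝ) : EReal))
    (quotFilter w)

/-- `ψ` is twice semidifferentiable at `z`. -/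
def TwiceSemidiffAt (ψ : E → ℝ) (z : E) : Prop :=
  SemidiffAt ψ z ∧ ∀ w, ∃ Q : ℝ,
    Tendsto (fun p : ℝ × E =>
        (ψ (z + p.1 • p.2) - ψ z - p.1 * (dsub ψ z p.2).toReal) / (p.1 ^ 2 / 2))
      (quotFilter w) (𝓝 Q)

/-- Second subderivative of the indicator function `δ_S` at `z` for the
(pre-)derivative function `d` and direction `w`:
`liminf_{t↓0, w'→w} (δ_S(z+tw') - t d(w'))/(t²/2)`. -/
def d2IndSub (S : Set E) (d : E → ℝ) (z w : E) : EReal :=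
  liminf (fun p : ℝ × E =>
      if z + p.1 • p.2 ∈ S then (((-(p.1 * d p.2)) / (p.1 ^ 2 / 2) : ℝ) : EReal)
      else (⊤ : EReal))
    (quotFilter w)

/-- Tangent (contingent) cone via sequences. -/
def tCone (S : Set E) (z : E) : Set E :=
  {w | ∃ (t : ℕ → ℝ) (w' : ℕ → E), (∀ k, 0 < t k) ∧ Tendsto t atTop (𝓝 0) ∧
    Tendsto w' atTop (𝓝 w) ∧ ∀ k, z + t k • w' k ∈ S}

/-- Inner tangent cone via sequences. -/
def innerTCone (S : Set E) (z : E) : Set E :=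
  {w | ∀ t : ℕ → ℝ, (∀ k, 0 < t k) → Tendsto t atTop (𝓝 0) →
    ∃ w' : ℕ → E, Tendsto w' atTop (𝓝 w) ∧ ∀ k, z + t k • w' k ∈ S}

/-- A set is geometrically derivable if tangent and inner tangent cones coincide
at every point of the set. -/
def GeomDerivable (S : Set E) : Prop := ∀ z ∈ S, tCone S z = innerTCone S z

/-- Graphical derivative (Painlevé–Kuratowski outer limit of difference quotients). -/
def graphDeriv (Y : E → Set F) (xb : E) (yb : F) (u : E) : Set F :=
  {h | ∃ (t : ℕ → ℝ) (u' : ℕ → E) (h' : ℕ → F),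
    (∀ k, 0 < t k) ∧ Tendsto t atTop (𝓝 0) ∧ Tendsto u' atTop (𝓝 u) ∧
    Tendsto h' atTop (𝓝 h) ∧ ∀ k, yb + t k • h' k ∈ Y (xb + t k • u' k)}

/-- Painlevé–Kuratowski inner limit of the difference quotients of a set-valued map. -/
def innerDeriv (Y : E → Set F) (xb : E) (yb : F) (u : E) : Set F :=
  {h | ∀ (t : ℕ → ℝ) (u' : ℕ → E), (∀ k, 0 < t k) → Tendsto t atTop (𝓝 0) →
    Tendsto u' atTop (𝓝 u) →
    ∃ h' : ℕ → F, Tendsto h' atTop (𝓝 h) ∧ ∀ k, yb + t k • h' k ∈ Y (xb + t k • u' k)}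

/-- `Y` is semidifferentiable at `xb` for `yb`: for every `u` the limit of the
difference quotient sets exists, i.e. outer and inner limits coincide. -/
def SetSemidiffAt (Y : E → Set F) (xb : E) (yb : F) : Prop :=
  ∀ u, graphDeriv Y xb yb u = innerDeriv Y xb yb u

/-- `Y` is calm around `(xb, yb)`. -/
def SetCalmAround (Y : E → Set F) (xb : E) (yb : F) : Prop :=
  ∃ l > (0 : ℝ), ∃ U ∈ 𝓝 xb, ∃ V ∈ 𝓝 yb, ∀ x ∈ U, ∀ y ∈ Y x ∩ V, ‖y - yb‖ ≤ l * ‖x - xb‖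

/-- `Y` is Lipschitz-like (Aubin property) around `(xb, yb)`. -/
def SetLipschitzLikeAround (Y : E → Set F) (xb : E) (yb : F) : Prop :=
  ∃ l > (0 : ℝ), ∃ U ∈ 𝓝 xb, ∃ V ∈ 𝓝 yb, ∀ x ∈ U, ∀ x' ∈ U, ∀ y ∈ Y x ∩ V,
    ∃ y' ∈ Y x', ‖y - y'‖ ≤ l * ‖x - x'‖

/-- Inner calmness of a set-valued map at `(xb, yb)` with respect to `X`. -/
def InnerCalmOn (Γ : E → Set F) (X : Set E) (xb : E) (yb : F) : Prop :=
  ∃ κ > (0 : ℝ), ∃ δ₀ > (0 : ℝ), ∀ x ∈ X ∩ closedBall xb δ₀,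
    ∃ y ∈ Γ x, ‖y - yb‖ ≤ κ * ‖x - xb‖

/-- Value of the (localized) maximization `max_{y ∈ A} f(x, y)`. -/
def maxVal (f : E × F → ℝ) (x : E) (A : Set F) : ℝ := sSup ((fun y => f (x, y)) '' A)

/-- Solution set of the maximization `max_{y ∈ A} f(x, y)`. -/
def argmaxSet (f : E × F → ℝ) (x : E) (A : Set F) : Set F :=
  {y ∈ A | ∀ y' ∈ A, f (x, y') ≤ f (x, y)}

/-- The defining inequalities of a local minimax point, for radius `δ₀` and radius
function `τ`. -/
def MinimaxIneq (f : E × F → ℝ) (X : Set E) (Y : E → Set F) (xb : E) (yb : F)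
    (δ₀ : ℝ) (τ : ℝ → ℝ) : Prop :=
  ∀ δ ∈ Ioc (0 : ℝ) δ₀, ∀ x ∈ X ∩ closedBall xb δ, ∀ y ∈ Y xb ∩ closedBall yb δ,
    f (xb, y) ≤ f (xb, yb) ∧ f (xb, yb) ≤ maxVal f x (Y x ∩ closedBall yb (τ δ))

/-- Local minimax point. -/
def IsLocalMinimaxPt (f : E × F → ℝ) (X : Set E) (Y : E → Set F) (xb : E) (yb : F) : Prop :=
  xb ∈ X ∧ yb ∈ Y xb ∧ ∃ δ₀ > (0 : ℝ), ∃ τ : ℝ → ℝ, (∀ δ, 0 ≤ τ δ) ∧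
    Tendsto τ (𝓝[>] (0 : ℝ)) (𝓝 0) ∧ MinimaxIneq f X Y xb yb δ₀ τ

/-- Calm local minimax point: a local minimax point whose radius function is calm at 0. -/
def IsCalmLocalMinimaxPt (f : E × F → ℝ) (X : Set E) (Y : E → Set F) (xb : E) (yb : F) : Prop :=
  xb ∈ X ∧ yb ∈ Y xb ∧ ∃ δ₀ > (0 : ℝ), ∃ τ : ℝ → ℝ, (∀ δ, 0 ≤ τ δ) ∧
    Tendsto τ (𝓝[>] (0 : ℝ)) (𝓝 0) ∧ (∃ κ > (0 : ℝ), ∀ δ ≥ (0 : ℝ), τ δ ≤ κ * δ) ∧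
    MinimaxIneq f X Y xb yb δ₀ τ

/-- Second-order growth condition at a (calm local) minimax point. -/
def SecondOrderGrowth (f : E × F → ℝ) (X : Set E) (Y : E → Set F) (xb : E) (yb : F) : Prop :=
  ∃ δ₀ > (0 : ℝ), ∃ ε > (0 : ℝ), ∃ μ > (0 : ℝ), ∃ κ > (0 : ℝ),
    ∀ x ∈ X ∩ closedBall xb δ₀, ∀ y ∈ Y xb ∩ closedBall yb δ₀,
      f (xb, y) + ε * ‖y - yb‖ ^ 2 ≤ f (xb, yb) ∧
      f (xb, yb) ≤ maxVal f x (Y x ∩ closedBall yb (κ * ‖x - xb‖)) - μ * ‖x - xb‖ ^ 2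

end Normed

section InnerP

variable {E F : Type*} [NormedAddCommGroup E] [InnerProductSpace ℝ E]
  [NormedAddCommGroup F] [InnerProductSpace ℝ F]

/-- Second subderivative of the indicator `δ_S` at `z` for a vector `v` and direction `w`. -/
def d2IndVec (S : Set E) (z v w : E) : EReal :=
  d2IndSub S (fun w' => ⟪v, w'⟫) z w

/-- Regular (Fréchet) normal cone, via polarity with the tangent cone. -/
def regNCone (S : Set E) (z : E) : Set E :=
  {v | ∀ w ∈ tCone S z, ⟪v, w⟫ ≤ 0}

/-- Limiting (Mordukhovich) normal cone. -/
def limNCone (S : Set E) (z : E) : Set E :=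
  {v | ∃ (zk : ℕ → E) (vk : ℕ → E), (∀ k, zk k ∈ S) ∧ Tendsto zk atTop (𝓝 z) ∧
    Tendsto vk atTop (𝓝 v) ∧ ∀ k, vk k ∈ regNCone S (zk k)}

/-- Normal cone of convex analysis. -/
def convNCone (D : Set E) (d : E) : Set E :=
  {v | ∀ z ∈ D, ⟪v, z - d⟫ ≤ 0}

/-- The inner product on a product of inner product spaces (ℓ²-pairing). -/
def pairInner (a b : E × F) : ℝ := ⟪a.1, b.1⟫ + ⟪a.2, b.2⟫

/-- Regular (Fréchet) normal cone for subsets of a product space. -/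
def regNConeP (S : Set (E × F)) (z : E × F) : Set (E × F) :=
  {v | ∀ w ∈ tCone S z, pairInner v w ≤ 0}

/-- Limiting normal cone for subsets of a product space. -/
def limNConeP (S : Set (E × F)) (z : E × F) : Set (E × F) :=
  {v | ∃ (zk : ℕ → E × F) (vk : ℕ → E × F), (∀ k, zk k ∈ S) ∧ Tendsto zk atTop (𝓝 z) ∧
    Tendsto vk atTop (𝓝 v) ∧ ∀ k, vk k ∈ regNConeP S (zk k)}

end InnerP

/-- Graph of a set-valued map. -/
def gphSet {E F : Type*} (Y : E → Set F) : Set (E × F) := {p : E × F | p.2 ∈ Y p.1}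

section ValueFunction

variable {E F : Type*} [NormedAddCommGroup E] [NormedAddCommGroup F]

/-- The part of `Y x` in the closed ball of radius `κ‖x-xb‖` around `yb`. -/
def localSlice (Y : E → Set F) (xb : E) (yb : F) (κ : ℝ) (x : E) : Set F :=
  Y x ∩ closedBall yb (κ * ‖x - xb‖)

/-- The value function of the maximization of `f (x, ·)` over `localSlice Y xb yb κ x`. -/
def localValue (f : E × F → ℝ) (Y : E → Set F) (xb : E) (yb : F) (κ : ℝ) (x : E) : ℝ :=
  maxVal f x (localSlice Y xb yb κ x)

instance quotFilter_neBot (u : E) : (quotFilter u).NeBot := by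
  unfold quotFilter; infer_instance

instance quotFilter_isCountablyGenerated (u : E) : (quotFilter u).IsCountablyGenerated := by
  unfold quotFilter; infer_instance

theorem tendsto_quotFilter_prodMk {ι : Type*} {l : Filter ι} {p : ι → ℝ × E} {h' : ι → F}
    {u : E} {h : F} (hp : Tendsto p l (quotFilter u)) (hh : Tendsto h' l (𝓝 h)) :
    Tendsto (fun i => ((p i).1, ((p i).2, h' i))) l (quotFilter (u, h)) := by
  unfold quotFilter at *
  rw [nhds_prod_eq]
  exact (tendsto_fst.comp hp).prodMk ((tendsto_snd.comp hp).prodMk hh)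

theorem localValue_self {f : E × F → ℝ} {Y : E → Set F} {xb : E} {yb : F} (hyb : yb ∈ Y xb)
    (κ : ℝ) : localValue f Y xb yb κ xb = f (xb, yb) := by
  have h : localSlice Y xb yb κ xb = {yb} := by
    simpa [localSlice] using hyb
  simp [localValue, maxVal, h]

variable [NormedSpace ℝ E] [NormedSpace ℝ F]

/-- The difference quotient `(ψ(z+tw)-ψ(z))/t` as a function of `(t, w)`. -/
def diffQuot (ψ : E → ℝ) (z : E) (p : ℝ × E) : ℝ := (ψ (z + p.1 • p.2) - ψ z) / p.1

/-- At the parameter `xb + t u'`, given by `p = (t, u')`, the localized maximization problem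
has a nonempty feasible set and is bounded above. -/
def RegularParam (f : E × F → ℝ) (Y : E → Set F) (xb : E) (yb : F) (κ : ℝ) (p : ℝ × E) : Prop :=
  0 < p.1 ∧ (localSlice Y xb yb κ (xb + p.1 • p.2)).Nonempty ∧
    BddAbove ((fun y => f (xb + p.1 • p.2, y)) '' localSlice Y xb yb κ (xb + p.1 • p.2))

theorem tendsto_add_smul_quotFilter (z u : E) :
    Tendsto (fun p : ℝ × E => z + p.1 • p.2) (quotFilter u) (𝓝 z) := by
  have h1 : Tendsto (fun p : ℝ × E => p.1) (quotFilter u) (𝓝 0) :=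
    tendsto_fst.mono_right nhdsWithin_le_nhds
  have h2 : Tendsto (fun p : ℝ × E => p.2) (quotFilter u) (𝓝 u) := tendsto_snd
  simpa using tendsto_const_nhds.add (h1.smul h2)

theorem dsub_eq_of_tendsto {ψ : E → ℝ} {z w : E} {L : ℝ}
    (h : Tendsto (diffQuot ψ z) (quotFilter w) (𝓝 L)) : dsub ψ z w = (L : EReal) :=
  ((continuous_coe_real_ereal.tendsto L).comp h).liminf_eq

/-- Difference quotients of a semidifferentiable function are bounded above uniformly over
compact sets of directions in the second variable. -/
theorem SemidiffAt.exists_eventually_diffQuot_le {f : E × F → ℝ} {z : E × F}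
    (hf : SemidiffAt f z) (u : E) {K : Set F} (hK : IsCompact K) :
    ∃ M, ∀ᶠ p in quotFilter u, ∀ h ∈ K, diffQuot f z (p.1, (p.2, h)) ≤ M := by
  refine IsCompact.induction_on hK ⟨0, by simp⟩ ?_ ?_ fun h _ => ?_
  · rintro s t hst ⟨M, hM⟩
    refine ⟨M, ?_⟩
    filter_upwards [hM] with p hp h hh using hp h (hst hh)
  · rintro s t ⟨M, hM⟩ ⟨N, hN⟩
    refine ⟨max M N, ?_⟩
    filter_upwards [hM, hN] with p hp hq h hh
    exact hh.elim (fun hh => (hp h hh).trans (le_max_left _ _))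
      fun hh => (hq h hh).trans (le_max_right _ _)
  · obtain ⟨L, hL⟩ := hf (u, h)
    have hlim : Tendsto (fun q : (ℝ × E) × F => diffQuot f z (q.1.1, (q.1.2, q.2)))
        (quotFilter u ×ˢ 𝓝 h) (𝓝 L) :=
      Tendsto.comp hL (tendsto_quotFilter_prodMk tendsto_fst tendsto_snd)
    obtain ⟨s, hs, T, hT, hsT⟩ := mem_prod_iff.1 (hlim.eventually (gt_mem_nhds (lt_add_one L)))
    refine ⟨T, mem_nhdsWithin_of_mem_nhds hT, L + 1, ?_⟩
    filter_upwards [hs] with p hp h' hh'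
    exact (hsT (mk_mem_prod hp hh') : diffQuot f z (p.1, (p.2, h')) < L + 1).le

/-- If `Y` is calm around `(xb, yb)` and `0` is an inner derivative direction over `0`, then `Y`
is inner calm at `(xb, yb)`. -/
theorem eventually_localSlice_nonempty {Y : E → Set F} {xb : E} {yb : F} {l : ℝ}
    (hyb : yb ∈ Y xb) (h0 : (0 : F) ∈ innerDeriv Y xb yb 0) {U : Set E} (hU : U ∈ 𝓝 xb)
    {V : Set F} (hV : V ∈ 𝓝 yb)
    (hc : ∀ x ∈ U, ∀ y ∈ Y x ∩ V, ‖y - yb‖ ≤ l * ‖x - xb‖) :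
    ∀ᶠ x in 𝓝 xb, (localSlice Y xb yb l x).Nonempty := by
  by_contra hcon
  obtain ⟨x, hx, hempty⟩ := exists_seq_forall_of_frequently (not_eventually.1 hcon)
  have hne : ∀ k, 0 < ‖x k - xb‖ := fun k => by
    rw [norm_pos_iff, sub_ne_zero]
    intro h
    apply hempty k
    rw [h]
    exact ⟨yb, hyb, by simp⟩
  have hnorm : Tendsto (fun k => √‖x k - xb‖) atTop (𝓝 0) := by
    have h1 : Tendsto (fun k => x k - xb) atTop (𝓝 0) := by
      simpa using hx.sub_const xb
    simpa using h1.norm.sqrt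
  have hu : Tendsto (fun k => (√‖x k - xb‖)⁻¹ • (x k - xb)) atTop (𝓝 0) := by
    refine squeeze_zero_norm (fun k => ?_) hnorm
    have hs := Real.sqrt_pos.2 (hne k)
    rw [norm_smul, norm_inv, Real.norm_of_nonneg hs.le, inv_mul_le_iff₀ hs,
      Real.mul_self_sqrt (norm_nonneg _)]
  obtain ⟨h', hh', hmem⟩ := h0 _ _ (fun k => Real.sqrt_pos.2 (hne k)) hnorm hu
  have hy : Tendsto (fun k => yb + √‖x k - xb‖ • h' k) atTop (𝓝 yb) := by
    simpa using tendsto_const_nhds.add (hnorm.smul hh')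
  obtain ⟨k, hk1, hk2⟩ := ((hx.eventually_mem hU).and (hy.eventually_mem hV)).exists
  have hmk := hmem k
  rw [smul_inv_smul₀ (Real.sqrt_pos.2 (hne k)).ne', add_sub_cancel] at hmk
  exact hempty k ⟨_, hmk, mem_closedBall_iff_norm.2 (hc _ hk1 _ ⟨hmk, hk2⟩)⟩

theorem add_smul_mem_closedBall_iff {xb u : E} {yb h : F} {κ t : ℝ} (ht : 0 < t) :
    yb + t • h ∈ closedBall yb (κ * ‖xb + t • u - xb‖) ↔ ‖h‖ ≤ κ * ‖u‖ := by
  rw [mem_closedBall_iff_norm, add_sub_cancel_left, add_sub_cancel_left, norm_smul, norm_smul,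
    Real.norm_of_nonneg ht.le, mul_left_comm, mul_le_mul_iff_right₀ ht]

theorem diffQuot_le_diffQuot_localValue {f : E × F → ℝ} {Y : E → Set F} {xb : E} {yb : F}
    (hyb : yb ∈ Y xb) {κ : ℝ} {p : ℝ × E} (hp : RegularParam f Y xb yb κ p) {h : F}
    (hh : yb + p.1 • h ∈ localSlice Y xb yb κ (xb + p.1 • p.2)) :
    diffQuot f (xb, yb) (p.1, (p.2, h)) ≤ diffQuot (localValue f Y xb yb κ) xb p := by
  unfold diffQuot
  rw [localValue_self hyb]
  refine div_le_div_of_nonneg_right (sub_le_sub_right ?_ _) hp.1.le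
  exact le_csSup hp.2.2 (mem_image_of_mem _ hh)

theorem exists_diffQuot_localValue_lt {f : E × F → ℝ} {Y : E → Set F} {xb : E} {yb : F}
    (hyb : yb ∈ Y xb) {κ : ℝ} {p : ℝ × E} (hp : RegularParam f Y xb yb κ p) {ε : ℝ}
    (hε : 0 < ε) :
    ∃ h : F, yb + p.1 • h ∈ localSlice Y xb yb κ (xb + p.1 • p.2) ∧
      diffQuot (localValue f Y xb yb κ) xb p - ε < diffQuot f (xb, yb) (p.1, (p.2, h)) := by
  obtain ⟨ht, hne, -⟩ := hp
  obtain ⟨_, ⟨y, hy, rfl⟩, hlt⟩ := exists_lt_of_lt_csSup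
    (hne.image fun y => f (xb + p.1 • p.2, y))
    (show localValue f Y xb yb κ (xb + p.1 • p.2) - p.1 * ε < _ from
      sub_lt_self _ (mul_pos ht hε))
  have hy' : yb + p.1 • p.1⁻¹ • (y - yb) = y := by
    rw [smul_inv_smul₀ ht.ne', add_sub_cancel]
  refine ⟨p.1⁻¹ • (y - yb), hy'.symm ▸ hy, ?_⟩
  simp only [diffQuot, localValue_self hyb, Prod.smul_mk, Prod.mk_add_mk, hy']
  rw [sub_lt_iff_lt_add, div_add' _ _ _ ht.ne', div_lt_div_iff_of_pos_right ht]
  linarith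

theorem eventually_regularParam [ProperSpace F] {f : E × F → ℝ} {Y : E → Set F} {xb : E} {yb : F}
    {κ : ℝ} (hκ : 0 < κ) (hf : SemidiffAt f (xb, yb))
    (hne : ∀ᶠ x in 𝓝 xb, (localSlice Y xb yb κ x).Nonempty) (u : E) :
    ∀ᶠ p in quotFilter u, RegularParam f Y xb yb κ p := by
  obtain ⟨M, hM⟩ := hf.exists_eventually_diffQuot_le u
    (isCompact_closedBall (0 : F) (κ * (‖u‖ + 1)))
  have hpos : ∀ᶠ p : ℝ × E in quotFilter u, 0 < p.1 :=
    tendsto_fst.eventually self_mem_nhdsWithin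
  have hnorm : ∀ᶠ p : ℝ × E in quotFilter u, ‖p.2‖ < ‖u‖ + 1 :=
    (tendsto_snd.norm).eventually (gt_mem_nhds (lt_add_one ‖u‖))
  filter_upwards [hM, hpos, hnorm, (tendsto_add_smul_quotFilter xb u).eventually hne]
    with p hpM ht hpn hpne
  refine ⟨ht, hpne, f (xb, yb) + M * p.1, ?_⟩
  rintro _ ⟨y, hy, rfl⟩
  have hy' : yb + p.1 • p.1⁻¹ • (y - yb) = y := by
    rw [smul_inv_smul₀ ht.ne', add_sub_cancel]
  have hball := hy.2
  rw [← hy', add_smul_mem_closedBall_iff ht] at hball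
  have hle := hpM (p.1⁻¹ • (y - yb)) (mem_closedBall_zero_iff.2
    (hball.trans (mul_le_mul_of_nonneg_left hpn.le hκ.le)))
  simp only [diffQuot, Prod.smul_mk, Prod.mk_add_mk, hy'] at hle
  rw [div_le_iff₀ ht] at hle
  linarith

/-- Along a subsequence, near-maximizers converge to a direction in the graphical derivative, and
the difference quotients of the value function converge to the semiderivative there. -/
theorem exists_subseq_tendsto_diffQuot_localValue [ProperSpace F] {f : E × F → ℝ}
    {Y : E → Set F} {xb : E} {yb : F} (hyb : yb ∈ Y xb) {κ : ℝ} (hκ : 0 < κ) {g : E × F → ℝ}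
    (hg : ∀ w, Tendsto (diffQuot f (xb, yb)) (quotFilter w) (𝓝 (g w)))
    {u : E} {p : ℕ → ℝ × E} (hp : Tendsto p atTop (quotFilter u))
    (hreg : ∀ k, RegularParam f Y xb yb κ (p k)) :
    ∃ φ : ℕ → ℕ, StrictMono φ ∧ ∃ h ∈ graphDeriv Y xb yb u,
      Tendsto (fun k => diffQuot (localValue f Y xb yb κ) xb (p (φ k))) atTop (𝓝 (g (u, h))) := by
  choose h' hmem hlt using fun k : ℕ =>
    exists_diffQuot_localValue_lt hyb (hreg k) (Nat.one_div_pos_of_nat (α := ℝ) (n := k))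
  have hp1 : Tendsto (fun k => (p k).1) atTop (𝓝 0) :=
    (tendsto_fst.comp hp).mono_right nhdsWithin_le_nhds
  have hp2 : Tendsto (fun k => (p k).2) atTop (𝓝 u) := tendsto_snd.comp hp
  have hbd : ∃ᶠ k in atTop, h' k ∈ closedBall (0 : F) (κ * (‖u‖ + 1)) := by
    refine Eventually.frequently ?_
    filter_upwards [hp2.norm.eventually (gt_mem_nhds (lt_add_one ‖u‖))] with k hk
    rw [mem_closedBall_zero_iff]
    exact ((add_smul_mem_closedBall_iff (hreg k).1).1 (hmem k).2).trans
      (mul_le_mul_of_nonneg_left hk.le hκ.le)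
  obtain ⟨h, -, φ, hφ, hlim⟩ := tendsto_subseq_of_frequently_bounded isBounded_closedBall hbd
  have hφt := hφ.tendsto_atTop
  refine ⟨φ, hφ, h, ⟨fun k => (p (φ k)).1, fun k => (p (φ k)).2, h' ∘ φ,
    fun k => (hreg _).1, hp1.comp hφt, hp2.comp hφt, hlim, fun k => (hmem _).1⟩, ?_⟩
  have hQ : Tendsto (fun k => diffQuot f (xb, yb) ((p (φ k)).1, ((p (φ k)).2, h' (φ k))))
      atTop (𝓝 (g (u, h))) :=
    (hg (u, h)).comp (tendsto_quotFilter_prodMk (hp.comp hφt) hlim)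
  have hQ' : Tendsto (fun k => diffQuot f (xb, yb) ((p (φ k)).1, ((p (φ k)).2, h' (φ k)))
      + 1 / ((φ k : ℝ) + 1)) atTop (𝓝 (g (u, h))) := by
    simpa using hQ.add ((tendsto_one_div_add_atTop_nhds_zero_nat (𝕜 := ℝ)).comp hφt)
  exact tendsto_of_tendsto_of_tendsto_of_le_of_le hQ hQ'
    (fun k => diffQuot_le_diffQuot_localValue hyb (hreg _) (hmem _))
    (fun k => (sub_lt_iff_lt_add.1 (hlt (φ k))).le)

/-- Limits of difference quotients of the value function dominate the semiderivative at every
inner derivative direction. -/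
theorem le_of_tendsto_diffQuot_localValue {f : E × F → ℝ} {Y : E → Set F} {xb : E} {yb : F}
    (hyb : yb ∈ Y xb) {l : ℝ} {U : Set E} (hU : U ∈ 𝓝 xb) {V : Set F} (hV : V ∈ 𝓝 yb)
    (hc : ∀ x ∈ U, ∀ y ∈ Y x ∩ V, ‖y - yb‖ ≤ l * ‖x - xb‖)
    {u : E} {h : F} (hh : h ∈ innerDeriv Y xb yb u) {d : ℝ}
    (hd : Tendsto (diffQuot f (xb, yb)) (quotFilter (u, h)) (𝓝 d))
    {p : ℕ → ℝ × E} (hp : Tendsto p atTop (quotFilter u))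
    (hreg : ∀ k, RegularParam f Y xb yb l (p k)) {L : ℝ}
    (hL : Tendsto (fun k => diffQuot (localValue f Y xb yb l) xb (p k)) atTop (𝓝 L)) :
    d ≤ L := by
  have hp1 : Tendsto (fun k => (p k).1) atTop (𝓝 0) :=
    (tendsto_fst.comp hp).mono_right nhdsWithin_le_nhds
  obtain ⟨h', hh', hmem⟩ := hh _ _ (fun k => (hreg k).1) hp1 (tendsto_snd.comp hp)
  have hy : Tendsto (fun k => yb + (p k).1 • h' k) atTop (𝓝 yb) := by
    simpa using tendsto_const_nhds.add (hp1.smul hh')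
  have hx := (tendsto_add_smul_quotFilter xb u).comp hp
  refine le_of_tendsto_of_tendsto (hd.comp (tendsto_quotFilter_prodMk hp hh')) hL ?_
  filter_upwards [hx.eventually_mem hU, hy.eventually_mem hV] with k hkU hkV
  exact diffQuot_le_diffQuot_localValue hyb (hreg k)
    ⟨hmem k, mem_closedBall_iff_norm.2 (hc _ hkU _ ⟨hmem k, hkV⟩)⟩

/-- The difference quotients of the localized value function in direction `u` converge to the
maximum of the semiderivative of `f` over the graphical derivative of `Y`. -/
theorem exists_max_tendsto_diffQuot_localValue [ProperSpace F] {f : E × F → ℝ}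
    {Y : E → Set F} {xb : E} {yb : F} (hyb : yb ∈ Y xb) (hsemi : SetSemidiffAt Y xb yb)
    {g : E × F → ℝ} (hg : ∀ w, Tendsto (diffQuot f (xb, yb)) (quotFilter w) (𝓝 (g w)))
    {l : ℝ} (hl : 0 < l) {U : Set E} (hU : U ∈ 𝓝 xb) {V : Set F} (hV : V ∈ 𝓝 yb)
    (hc : ∀ x ∈ U, ∀ y ∈ Y x ∩ V, ‖y - yb‖ ≤ l * ‖x - xb‖) (u : E) :
    ∃ h ∈ graphDeriv Y xb yb u, (∀ h' ∈ graphDeriv Y xb yb u, g (u, h') ≤ g (u, h)) ∧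
      Tendsto (diffQuot (localValue f Y xb yb l) xb) (quotFilter u) (𝓝 (g (u, h))) := by
  have h0 : (0 : F) ∈ innerDeriv Y xb yb 0 := by
    rw [← hsemi 0]
    exact ⟨fun k => 1 / ((k : ℝ) + 1), fun _ => 0, fun _ => 0,
      fun k => Nat.one_div_pos_of_nat, tendsto_one_div_add_atTop_nhds_zero_nat,
      tendsto_const_nhds, tendsto_const_nhds, fun k => by simpa using hyb⟩
  have hev := eventually_regularParam hl (fun w => ⟨g w, hg w⟩)
    (eventually_localSlice_nonempty hyb h0 hU hV hc) u
  obtain ⟨p, hp, hreg⟩ := exists_seq_forall_of_frequently hev.frequently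
  obtain ⟨φ, hφ, h, hh, hlim⟩ := exists_subseq_tendsto_diffQuot_localValue hyb hl hg hp hreg
  have hmax : ∀ h' ∈ graphDeriv Y xb yb u, g (u, h') ≤ g (u, h) := fun h' hh' =>
    le_of_tendsto_diffQuot_localValue hyb hU hV hc (hsemi u ▸ hh') (hg _)
      (hp.comp hφ.tendsto_atTop) (fun k => hreg _) hlim
  refine ⟨h, hh, hmax, tendsto_of_subseq_tendsto fun q hq => ?_⟩
  obtain ⟨N, hN⟩ := eventually_atTop.1 (hq.eventually hev)
  have hqN : Tendsto (fun k => q (k + N)) atTop (quotFilter u) :=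
    hq.comp (tendsto_add_atTop_nat N)
  have hregN : ∀ k, RegularParam f Y xb yb l (q (k + N)) := fun k => hN _ (Nat.le_add_left N k)
  obtain ⟨θ, hθ, h₁, hh₁, hlim₁⟩ := exists_subseq_tendsto_diffQuot_localValue hyb hl hg hqN hregN
  have hle : g (u, h) ≤ g (u, h₁) :=
    le_of_tendsto_diffQuot_localValue hyb hU hV hc (hsemi u ▸ hh) (hg _)
      (hqN.comp hθ.tendsto_atTop) (fun k => hregN _) hlim₁
  exact ⟨fun k => θ k + N, (hmax h₁ hh₁).antisymm hle ▸ hlim₁⟩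

end ValueFunction

/-- If `f` is semidifferentiable at `(xb, yb)` and `Y` is
semidifferentiable at `xb` for `yb` and calm around `(xb, yb)`, then there exists
`κ > 0` such that the localized value function
`V_τ(x) = max_{y' ∈ Y(x) ∩ 𝔹_{κ‖x-xb‖}(yb)} f(x, y')` is semidifferentiable at `xb`
and `V_τ'(xb; u) = max_{h ∈ DY(xb,yb)(u)} df(xb,yb)(u,h)` with the maximum attained. -/
theorem value_function_semidifferentiable
    {n m : ℕ} (f : Eu n × Eu m → ℝ) (Y : Eu n → Set (Eu m))
    (xb : Eu n) (yb : Eu m) (hyb : yb ∈ Y xb) (hY : ∀ x, IsClosed (Y x))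
    (hf : SemidiffAt f (xb, yb))
    (hsemi : SetSemidiffAt Y xb yb) (hcalm : SetCalmAround Y xb yb) :
    ∃ κ > (0 : ℝ),
      SemidiffAt (fun x => maxVal f x (Y x ∩ closedBall yb (κ * ‖x - xb‖))) xb ∧
      ∀ u : Eu n, ∃ h ∈ graphDeriv Y xb yb u,
        dsub (fun x => maxVal f x (Y x ∩ closedBall yb (κ * ‖x - xb‖))) xb u =
          dsub f (xb, yb) (u, h) ∧
        ∀ h' ∈ graphDeriv Y xb yb u, dsub f (xb, yb) (u, h') ≤ dsub f (xb, yb) (u, h) := by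
  choose g hg using hf
  obtain ⟨l, hl, U, hU, V, hV, hc⟩ := hcalm
  have key := exists_max_tendsto_diffQuot_localValue hyb hsemi hg hl hU hV hc
  refine ⟨l, hl, fun u => ?_, fun u => ?_⟩
  · obtain ⟨h, -, -, hlim⟩ := key u
    exact ⟨_, hlim⟩
  · obtain ⟨h, hh, hmax, hlim⟩ := key u
    refine ⟨h, hh, (dsub_eq_of_tendsto hlim).trans (dsub_eq_of_tendsto (hg _)).symm,
      fun h' hh' => ?_⟩
    rw [dsub_eq_of_tendsto (hg _), dsub_eq_of_tendsto (hg _)]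
    exact EReal.coe_le_coe_iff.2 (hmax h' hh')
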